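/- Let $q$ be a prime power and for $n \ge 1$ let $H_{n,q}$ be the number of matrices in $GL(n,q)$ having no eigenvalue in $\mathbb{F}_q$ (no one-dimensional invariant subspace). Then $\lim_{q\to\infty} \lim_{n\to\infty} H_{n,q}/|GL(n,q)| = 1/e$. -/

import Mathlib

/-!
Write `q = |F|`, `g n = |GL(n,q)|`, and for `S ⊆ F` let `ratio S n` be the number of
endomorphisms of `F ^ n` with no eigenvalue in `S`, divided by `g n`. Every matrix without an
eigenvalue in `F` is invertible, so the proportion in question is `ratio F n`.

By Fitting's lemma, an endomorphism `f` splits uniquely as the sum of its restriction to the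
generalized `c`-eigenspace and an endomorphism of which `c` is not an eigenvalue. Hence, for
`c ∉ S`,
`ratio S n = ∑_{k + l = n} nu c k * ratio (S ∪ {c}) l`   (`ratio_eq_sum`),
where `nu c k` is the number of endomorphisms of `F ^ k` with characteristic polynomial
`(X - c) ^ k`, divided by `g k`. The underlying count `card_fitting` considers the map
`(e, x, y) ↦ e (x ⊕ y) e⁻¹`: it is surjective onto the endomorphisms with the right eigenvalue
multiplicity (`exists_block`), and its fibres are torsors under `GL(k,q) × GL(l,q)`
(`block_unique`), because an intertwiner between `x` and `y` vanishes.

Since `ratio {c} n = 1`, the case `S = ∅` says that the partial sums of `nu c` are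
`ratio ∅ n = q ^ n² / g n = ∏_{i = 1}^n (1 - q⁻ⁱ)⁻¹`; so the nilpotent matrices need not be counted
separately. These products converge to some `P` with
`1 - 1 / (q - 1) ≤ 1 / P ≤ 1 - 1 / q`   (`exists_limit`).

If `q ≥ 4` then `P < 2`, and as `nu c 0 = 1` the convolution by `nu c` is invertible on convergent
sequences: it multiplies limits by `P` (`renewal`). Adding the elements of `F` to `S` one by one,
`ratio F n` tends to `P ^ (1 - q)`. This lies between `(1 - 1 / (q - 1)) ^ (q - 1)` and
`(1 - 1 / q) ^ (q - 1)`, which both tend to `1 / e`.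
-/

open Filter

namespace EigFree
open Polynomial Module

/-! ### Fitting decomposition with respect to one eigenvalue -/

section Linear
variable {F V W U : Type*} [Field F] [AddCommGroup V] [Module F V] [FiniteDimensional F V]
  [AddCommGroup W] [Module F W] [FiniteDimensional F W]
  [AddCommGroup U] [Module F U] [FiniteDimensional F U]

lemma charpoly_of_nilpotent_sub {f : End F V} {c : F} (h : IsNilpotent (f - c • 1)) :
    f.charpoly = (X - C c) ^ finrank F V := by
  have h1 := h.charpoly_eq_X_pow_finrank
  rw [LinearMap.charpoly_sub_smul] at h1
  have h2 := congrArg (fun p => p.comp (X - C c)) h1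
  simpa [comp_assoc] using h2

omit [FiniteDimensional F V] [FiniteDimensional F W] in
lemma intertwine_aeval {f : End F V} {g : End F W} {r : V →ₗ[F] W} (h : r ∘ₗ f = g ∘ₗ r)
    (p : F[X]) (v : V) : r (aeval f p v) = aeval g p (r v) := by
  induction p using Polynomial.induction_on' with
  | add p q hp hq => simp [hp, hq]
  | monomial n a =>
    simp only [aeval_monomial, Module.End.mul_apply, Module.algebraMap_end_apply, map_smul]
    congr 1
    induction n with
    | zero => rfl
    | succ n ih =>
      rw [pow_succ', pow_succ', Module.End.mul_apply, Module.End.mul_apply, ← ih]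
      exact LinearMap.congr_fun h _

lemma injective_sub_pow {g : End F W} {c : F} (h : ¬ g.charpoly.IsRoot c) (k : ℕ) :
    Function.Injective (aeval g ((X - C c) ^ k)) := by
  rw [← End.hasEigenvalue_iff_isRoot_charpoly, End.hasEigenvalue_iff, not_not,
    End.eigenspace_def, LinearMap.ker_eq_bot] at h
  have : aeval g ((X - C c) ^ k) = (g - c • 1) ^ k := by
    simp [Algebra.algebraMap_eq_smul_one]
  rw [this, Module.End.coe_pow]
  exact h.iterate k

/-- Fitting decomposition for the eigenvalue `c`. The summands are the kernels of `(X - c) ^ k` and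
of the cofactor of `(X - c) ^ k` in the characteristic polynomial, both evaluated at `f`. -/
lemma exists_split (f : End F U) (c : F) : ∃ (P Q : Submodule F U) (e : (P × Q) ≃ₗ[F] U)
    (x : End F P) (y : End F Q), f = e.conj (x.prodMap y) ∧
      x.charpoly = (X - C c) ^ finrank F P ∧ ¬ y.charpoly.IsRoot c := by
  obtain ⟨g, hg, hgc⟩ := exists_eq_pow_rootMultiplicity_mul_and_not_dvd f.charpoly
    f.charpoly_monic.ne_zero c
  set k := f.charpoly.rootMultiplicity c
  have hco : IsCoprime ((X - C c) ^ k) g :=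
    IsCoprime.pow_left ((irreducible_X_sub_C c).coprime_iff_not_dvd.2 hgc)
  have hker : LinearMap.ker (aeval f ((X - C c) ^ k * g)) = ⊤ := by
    rw [← hg, LinearMap.aeval_self_charpoly, LinearMap.ker_zero]
  have hcompl : IsCompl (LinearMap.ker (aeval f ((X - C c) ^ k))) (LinearMap.ker (aeval f g)) :=
    ⟨disjoint_ker_aeval_of_isCoprime f hco, codisjoint_iff.2
      (by rw [sup_ker_aeval_eq_ker_aeval_mul_of_coprime f hco, hker])⟩
  have hinv : ∀ p : F[X], ∀ v ∈ LinearMap.ker (aeval f p), f v ∈ LinearMap.ker (aeval f p) := by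
    intro p v hv
    rw [LinearMap.mem_ker] at hv ⊢
    have : aeval f p * f = f * aeval f p := by
      simpa using congrArg (aeval f) (mul_comm p X)
    rw [← Module.End.mul_apply, this, Module.End.mul_apply, hv, map_zero]
  have hrest : ∀ p s : F[X], ∀ v : LinearMap.ker (aeval f p),
      ((aeval (f.restrict (hinv p)) s v : LinearMap.ker (aeval f p)) : U) = aeval f s v := by
    intro p s v
    induction s using Polynomial.induction_on' with
    | add s t hs ht => simp [hs, ht]
    | monomial n a =>
      simp only [aeval_monomial, Module.End.mul_apply, Module.algebraMap_end_apply,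
        Submodule.coe_smul]
      congr 1
      induction n with
      | zero => simp
      | succ n ih => rw [pow_succ', pow_succ']; simp [ih]
  refine ⟨_, _, Submodule.prodEquivOfIsCompl _ _ hcompl, f.restrict (hinv _), f.restrict (hinv _),
    ?_, ?_, ?_⟩
  · ext u
    obtain ⟨w, rfl⟩ := (Submodule.prodEquivOfIsCompl _ _ hcompl).surjective u
    rw [LinearEquiv.conj_apply_apply, LinearEquiv.symm_apply_apply]
    simp only [LinearMap.prodMap_apply, Submodule.coe_prodEquivOfIsCompl',
      LinearMap.coe_restrict_apply, map_add]
  · apply charpoly_of_nilpotent_sub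
    refine ⟨k, ?_⟩
    ext v
    have := hrest ((X - C c) ^ k) ((X - C c) ^ k) v
    rw [LinearMap.mem_ker.1 v.2] at this
    simpa [Algebra.algebraMap_eq_smul_one] using this
  · rw [← End.hasEigenvalue_iff_isRoot_charpoly]
    intro h
    obtain ⟨v, hv⟩ := h.exists_hasEigenvector
    have h1 := Module.End.aeval_apply_of_hasEigenvector (p := g) hv
    have h2 := hrest g g v
    rw [LinearMap.mem_ker.1 v.2, h1] at h2
    have h3 : g.eval c ≠ 0 := fun h0 => hgc (dvd_iff_isRoot.2 h0)
    have := hv.2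
    simp_all

omit [FiniteDimensional F V] [FiniteDimensional F W] [FiniteDimensional F U] in
lemma block_conj {V' W' : Type*} [AddCommGroup V'] [Module F V'] [AddCommGroup W'] [Module F W']
    (e : (V × W) ≃ₗ[F] U) (x : End F V) (y : End F W) (r : V' ≃ₗ[F] V) (s : W' ≃ₗ[F] W) :
    ((r.prodCongr s).trans e).conj ((r.symm.conj x).prodMap (s.symm.conj y)) =
      e.conj (x.prodMap y) := by
  ext u
  simp [LinearEquiv.conj_apply]

/-- `exists_split` in coordinates: the dimension of the first summand is the multiplicity of `c` as a
root of the characteristic polynomial. -/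
lemma exists_block {n k l : ℕ} (f : End F (Fin n → F)) (c : F) (hkl : k + l = n)
    (hk : f.charpoly.rootMultiplicity c = k) :
    ∃ (e : ((Fin k → F) × (Fin l → F)) ≃ₗ[F] (Fin n → F)) (x : End F (Fin k → F))
      (y : End F (Fin l → F)), f = e.conj (x.prodMap y) ∧
      x.charpoly = (X - C c) ^ k ∧ ¬ y.charpoly.IsRoot c := by
  obtain ⟨P, Q, e, x, y, hf, hx, hy⟩ := exists_split f c
  have hcp : f.charpoly = (X - C c) ^ finrank F P * y.charpoly := by
    rw [hf, LinearEquiv.charpoly_conj, LinearMap.charpoly_prodMap, hx]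
  have hP : finrank F P = k := by
    rw [← hk, hcp, rootMultiplicity_mul, rootMultiplicity_X_sub_C_pow,
      rootMultiplicity_eq_zero hy, add_zero]
    rw [← hcp]; exact f.charpoly_monic.ne_zero
  have hQ : finrank F Q = l := by
    have := e.finrank_eq
    rw [Module.finrank_prod, hP, Module.finrank_fin_fun] at this
    omega
  let r : (Fin k → F) ≃ₗ[F] P := LinearEquiv.ofFinrankEq _ _ (by simp [hP])
  let s : (Fin l → F) ≃ₗ[F] Q := LinearEquiv.ofFinrankEq _ _ (by simp [hQ])
  refine ⟨(r.prodCongr s).trans e, r.symm.conj x, s.symm.conj y, ?_, ?_, ?_⟩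
  · rw [block_conj, hf]
  · rw [LinearEquiv.charpoly_conj, hx, hP]
  · rwa [LinearEquiv.charpoly_conj]

omit [FiniteDimensional F U] in
/-- The block form of an endomorphism is unique up to changes of basis of the two summands:
`e⁻¹ e'` intertwines the two block endomorphisms, and its off-diagonal blocks vanish because
`(X - c) ^ k` kills the first block and is injective on the second one. -/
lemma block_unique {c : F} {k : ℕ} {e e' : (V × W) ≃ₗ[F] U} {x x' : End F V} {y y' : End F W}
    (hx : x.charpoly = (X - C c) ^ k) (hx' : x'.charpoly = (X - C c) ^ k)
    (hy : ¬ y.charpoly.IsRoot c) (hy' : ¬ y'.charpoly.IsRoot c)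
    (h : e.conj (x.prodMap y) = e'.conj (x'.prodMap y')) :
    ∃ (r : V ≃ₗ[F] V) (s : W ≃ₗ[F] W), e' = (r.prodCongr s).trans e ∧
      x' = r.symm.conj x ∧ y' = s.symm.conj y := by
  set R := e'.trans e.symm with hR
  have hcomm : ∀ w, R (x' w.1, y' w.2) = (x (R w).1, y (R w).2) := by
    intro w
    have := LinearMap.congr_fun h (e' w)
    simp only [LinearEquiv.conj_apply, LinearMap.comp_apply, LinearEquiv.coe_coe,
      LinearEquiv.symm_apply_apply, LinearMap.prodMap_apply] at this
    rw [hR, LinearEquiv.trans_apply, ← this]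
    simp
  have hax : aeval x ((X - C c) ^ k) = 0 := by rw [← hx]; exact x.aeval_self_charpoly
  have hax' : aeval x' ((X - C c) ^ k) = 0 := by rw [← hx']; exact x'.aeval_self_charpoly
  have hay := injective_sub_pow hy k
  have hay' := LinearMap.injective_iff_surjective.1 (injective_sub_pow hy' k)
  have h12 : ∀ w : W, (R (0, w)).1 = 0 := by
    intro w
    let r : W →ₗ[F] V := LinearMap.fst F V W ∘ₗ R.toLinearMap ∘ₗ LinearMap.inr F V W
    obtain ⟨w, rfl⟩ := hay' w
    have := intertwine_aeval (f := y') (g := x) (r := r)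
      (by ext1 w; simpa [r] using congrArg Prod.fst (hcomm (0, w))) ((X - C c) ^ k) w
    rw [hax] at this
    exact this
  have h21 : ∀ v : V, (R (v, 0)).2 = 0 := by
    intro v
    let r : V →ₗ[F] W := LinearMap.snd F V W ∘ₗ R.toLinearMap ∘ₗ LinearMap.inl F V W
    have := intertwine_aeval (f := x') (g := y) (r := r)
      (by ext1 w; simpa [r] using congrArg Prod.snd (hcomm (w, 0))) ((X - C c) ^ k) v
    rw [hax', LinearMap.zero_apply, map_zero] at this
    exact hay (by rw [map_zero]; exact this.symm)
  let r : V →ₗ[F] V := LinearMap.fst F V W ∘ₗ R.toLinearMap ∘ₗ LinearMap.inl F V W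
  let s : W →ₗ[F] W := LinearMap.snd F V W ∘ₗ R.toLinearMap ∘ₗ LinearMap.inr F V W
  have hRv : ∀ v, R (v, 0) = (r v, 0) := fun v => Prod.ext rfl (h21 v)
  have hRw : ∀ w, R (0, w) = (0, s w) := fun w => Prod.ext (h12 w) rfl
  have hr : Function.Injective r := by
    intro v v' hv
    have : R (v, 0) = R (v', 0) := by rw [hRv, hRv, hv]
    simpa using R.injective this
  have hs : Function.Injective s := by
    intro v v' hv
    have : R (0, v) = R (0, v') := by rw [hRw, hRw, hv]
    simpa using R.injective this
  have hRR : ∀ v w, R (v, w) = (r v, s w) := by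
    intro v w
    have : (v, w) = (v, 0) + (0, w) := by simp
    rw [this, map_add, hRv, hRw]; simp
  refine ⟨LinearEquiv.ofInjectiveEndo r hr, LinearEquiv.ofInjectiveEndo s hs, ?_, ?_, ?_⟩
  · apply LinearEquiv.ext
    rintro ⟨v, w⟩
    have := hRR v w
    rw [hR, LinearEquiv.trans_apply, LinearEquiv.symm_apply_eq] at this
    simpa using this
  · ext1 v
    rw [LinearEquiv.conj_apply_apply, LinearEquiv.symm_symm, LinearEquiv.eq_symm_apply]
    simpa [hRR] using congrArg Prod.fst (hcomm (v, 0))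
  · ext1 w
    rw [LinearEquiv.conj_apply_apply, LinearEquiv.symm_symm, LinearEquiv.eq_symm_apply]
    simpa [hRR] using congrArg Prod.snd (hcomm (0, w))

end Linear

/-! ### Counting over a finite field -/

section Count
variable (F : Type) [Field F] [Fintype F]

/-- The order of `GL(n, F)`. -/
noncomputable def gl (n : ℕ) : ℕ := Nat.card ((Fin n → F) ≃ₗ[F] (Fin n → F))

variable {F}

/-- The number of endomorphisms of `F ^ n` without an eigenvalue in `S`. -/
noncomputable def freeCard (S : Set F) (n : ℕ) : ℕ :=
  Nat.card {f : End F (Fin n → F) // ∀ a ∈ S, ¬ f.charpoly.IsRoot a}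

/-- The number of endomorphisms of `F ^ n` that are `c` plus a nilpotent one, encoded through the
characteristic polynomial. -/
noncomputable def unipCard (c : F) (n : ℕ) : ℕ :=
  Nat.card {f : End F (Fin n → F) // f.charpoly = (X - C c) ^ n}

instance (n m : ℕ) : Finite ((Fin n → F) →ₗ[F] (Fin m → F)) :=
  Finite.of_injective _ DFunLike.coe_injective

instance (n : ℕ) : Finite ((Fin n → F) ≃ₗ[F] (Fin n → F)) :=
  Finite.of_injective _ DFunLike.coe_injective

lemma gl_pos (n : ℕ) : 0 < gl F n := Nat.card_pos

omit [Fintype F] in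
lemma card_equiv_prod {n k l : ℕ} (hkl : k + l = n) :
    Nat.card (((Fin k → F) × (Fin l → F)) ≃ₗ[F] (Fin n → F)) = gl F n := by
  let e0 : ((Fin k → F) × (Fin l → F)) ≃ₗ[F] (Fin n → F) :=
    LinearEquiv.ofFinrankEq _ _ (by simp [hkl])
  exact Nat.card_congr
    { toFun := fun e => e0.symm.trans e
      invFun := fun e => e0.trans e
      left_inv := fun e => by ext1 v; simp
      right_inv := fun e => by ext1 v; simp }

instance (n k l : ℕ) : Finite (((Fin k → F) × (Fin l → F)) ≃ₗ[F] (Fin n → F)) :=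
  Finite.of_injective _ DFunLike.coe_injective

/-- The key count: `(e, x, y) ↦ e (x ⊕ y) e⁻¹` maps onto the endomorphisms on the left, with all
fibres of cardinality `gl F k * gl F l`. -/
lemma card_fitting {S : Set F} {c : F} (hc : c ∉ S) {n k l : ℕ} (hkl : k + l = n) :
    Nat.card {f : End F (Fin n → F) //
        (∀ a ∈ S, ¬ f.charpoly.IsRoot a) ∧ f.charpoly.rootMultiplicity c = k} *
      (gl F k * gl F l) = gl F n * (unipCard c k * freeCard (insert c S) l) := by
  set T := {f : End F (Fin n → F) //
        (∀ a ∈ S, ¬ f.charpoly.IsRoot a) ∧ f.charpoly.rootMultiplicity c = k}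
  set A := {f : End F (Fin k → F) // f.charpoly = (X - C c) ^ k}
  set B := {f : End F (Fin l → F) // ∀ a ∈ insert c S, ¬ f.charpoly.IsRoot a}
  let Ω := (((Fin k → F) × (Fin l → F)) ≃ₗ[F] (Fin n → F)) × A × B
  have hcp : ∀ w : Ω, (w.1.conj (w.2.1.1.prodMap w.2.2.1)).charpoly =
      (X - C c) ^ k * w.2.2.1.charpoly := by
    intro w
    rw [LinearEquiv.charpoly_conj, LinearMap.charpoly_prodMap, w.2.1.2]
  let Φ : Ω → T := fun w => ⟨w.1.conj (w.2.1.1.prodMap w.2.2.1), by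
    rw [hcp]
    constructor
    · intro a ha hroot
      rcases root_mul.1 hroot with h | h
      · have : a - c = 0 := by
          have h' : (a - c) ^ k = 0 := by simpa [IsRoot.def] using h
          exact eq_zero_of_pow_eq_zero h'
        exact hc (sub_eq_zero.1 this ▸ ha)
      · exact w.2.2.2 a (Set.mem_insert_of_mem _ ha) h
    · rw [rootMultiplicity_mul, rootMultiplicity_X_sub_C_pow,
        rootMultiplicity_eq_zero (w.2.2.2 c (Set.mem_insert _ _)), add_zero]
      exact (((monic_X_sub_C c).pow k).mul w.2.2.1.charpoly_monic).ne_zero⟩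
  have hfib : ∀ t : T, Nat.card {w : Ω // Φ w = t} = gl F k * gl F l := by
    rintro ⟨f, hf, hfk⟩
    obtain ⟨e, x, y, hfe, hx, hy⟩ := exists_block f c hkl hfk
    have hB : ∀ a ∈ insert c S, ¬ y.charpoly.IsRoot a := by
      rintro a (rfl | ha)
      · exact hy
      · intro h
        apply hf a ha
        rw [hfe, LinearEquiv.charpoly_conj, LinearMap.charpoly_prodMap]
        exact root_mul.2 (Or.inr h)
    rw [gl, gl, ← Nat.card_prod]
    symm
    refine Nat.card_eq_of_bijective (fun p => ⟨((p.1.prodCongr p.2).trans e,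
      ⟨p.1.symm.conj x, by rw [LinearEquiv.charpoly_conj, hx]⟩,
      ⟨p.2.symm.conj y, by rw [LinearEquiv.charpoly_conj]; exact hB⟩),
      Subtype.ext ((block_conj e x y p.1 p.2).trans hfe.symm)⟩) ⟨?_, ?_⟩
    · rintro ⟨r, s⟩ ⟨r', s'⟩ h
      have h1 : (r.prodCongr s).trans e = (r'.prodCongr s').trans e :=
        congrArg (fun w => w.1.1) h
      have h2 : ∀ v w, (r v, s w) = (r' v, s' w) := by
        intro v w
        have := LinearEquiv.congr_fun h1 (v, w)
        simpa using this
      refine Prod.ext (LinearEquiv.ext fun v => ?_) (LinearEquiv.ext fun w => ?_)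
      · exact congrArg Prod.fst (h2 v 0)
      · exact congrArg Prod.snd (h2 0 w)
    · rintro ⟨⟨e', ⟨x', hx'⟩, ⟨y', hy'⟩⟩, hw⟩
      have hw' : e'.conj (x'.prodMap y') = f := congrArg Subtype.val hw
      obtain ⟨r, s, h1, h2, h3⟩ := block_unique hx hx' hy (hy' c (Set.mem_insert _ _))
        (hfe.symm.trans hw'.symm)
      refine ⟨(r, s), ?_⟩
      subst h1 h2 h3
      rfl
  have hΩ : Nat.card Ω = gl F n * (unipCard c k * freeCard (insert c S) l) := by
    rw [Nat.card_prod, Nat.card_prod, card_equiv_prod hkl]; rfl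
  rw [← hΩ, Nat.card_congr (Equiv.sigmaFiberEquiv Φ).symm]
  have : Fintype T := Fintype.ofFinite _
  rw [Nat.card_sigma, Finset.sum_congr rfl fun t _ => hfib t]
  simp [Nat.card_eq_fintype_card]

lemma freeCard_eq_sum {S : Set F} (c : F) (n : ℕ) :
    freeCard S n = ∑ p ∈ Finset.HasAntidiagonal.antidiagonal n, Nat.card {f : End F (Fin n → F) //
        (∀ a ∈ S, ¬ f.charpoly.IsRoot a) ∧ f.charpoly.rootMultiplicity c = p.1} := by
  have hle : ∀ f : End F (Fin n → F), f.charpoly.rootMultiplicity c < n + 1 := by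
    intro f
    have := natDegree_le_of_dvd (pow_rootMultiplicity_dvd f.charpoly c) f.charpoly_monic.ne_zero
    rw [natDegree_pow, natDegree_X_sub_C, mul_one, LinearMap.charpoly_natDegree, Module.finrank_fin_fun] at this
    omega
  rw [Finset.Nat.sum_antidiagonal_eq_sum_range_succ_mk, Finset.sum_range, ← Nat.card_sigma]
  exact Nat.card_congr
    { toFun := fun f => ⟨⟨_, hle f.1⟩, f.1, f.2, rfl⟩
      invFun := fun f => ⟨f.2.1, f.2.2.1⟩
      left_inv := fun f => rfl
      right_inv := by
        rintro ⟨⟨i, hi⟩, f, hf, h⟩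
        dsimp at h
        subst h
        rfl }

/-- The number of endomorphisms of `F ^ n` without an eigenvalue in `S`, relative to `|GL(n, F)|`. For
`S = ∅` it exceeds `1`. -/
noncomputable def ratio (S : Set F) (n : ℕ) : ℝ := freeCard S n / gl F n

/-- The number of endomorphisms of `F ^ n` with `c` as their only eigenvalue, even over an algebraic
closure, relative to `|GL(n, F)|`. -/
noncomputable def nu (c : F) (n : ℕ) : ℝ := unipCard c n / gl F n

lemma ratio_eq_sum {S : Set F} {c : F} (hc : c ∉ S) (n : ℕ) :
    ratio S n = ∑ p ∈ Finset.HasAntidiagonal.antidiagonal n, nu c p.1 * ratio (insert c S) p.2 := by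
  have hg : ∀ n, (gl F n : ℝ) ≠ 0 := fun n => by exact_mod_cast (gl_pos n).ne'
  rw [ratio, freeCard_eq_sum c, Nat.cast_sum, Finset.sum_div]
  refine Finset.sum_congr rfl fun p hp => ?_
  have h := congrArg (Nat.cast (R := ℝ)) (card_fitting hc (Finset.HasAntidiagonal.mem_antidiagonal.1 hp))
  push_cast at h
  have h1 := hg n; have h2 := hg p.1; have h3 := hg p.2
  rw [nu, ratio]
  field_simp
  linear_combination h

omit [Fintype F] in
lemma freeCard_singleton (c : F) (n : ℕ) : freeCard {c} n = gl F n := by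
  have key : ∀ f : End F (Fin n → F), (∀ a ∈ ({c} : Set F), ¬ f.charpoly.IsRoot a) ↔
      IsUnit (f - c • 1) := by
    intro f
    rw [LinearMap.isUnit_iff_ker_eq_bot, ← End.eigenspace_def]
    simp only [Set.mem_singleton_iff, forall_eq, ← End.hasEigenvalue_iff_isRoot_charpoly,
      End.hasEigenvalue_iff, not_not]
  rw [gl, Nat.card_congr (LinearMap.GeneralLinearGroup.generalLinearEquiv F
    (Fin n → F)).symm.toEquiv]
  rw [freeCard, Nat.card_congr (Equiv.subtypeEquivRight key)]
  rw [Nat.card_congr (Equiv.subtypeEquiv (q := fun f : End F (Fin n → F) => IsUnit f)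
    (Equiv.subRight (c • (1 : End F (Fin n → F)))) (fun f => by simp))]
  exact Nat.card_congr Submonoid.unitsTypeEquivIsUnitSubmonoid.toEquiv.symm

lemma freeCard_empty (n : ℕ) : freeCard (∅ : Set F) n = Fintype.card F ^ (n ^ 2) := by
  rw [freeCard, Nat.card_congr (Equiv.subtypeUnivEquiv (by simp)),
    Nat.card_congr (LinearMap.toMatrix' (R := F)).toEquiv]
  simp [Matrix, Nat.card_eq_fintype_card, sq, pow_mul]

lemma gl_eq (n : ℕ) : (gl F n : ℝ) = Fintype.card F ^ (n ^ 2) *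
    ∏ i ∈ Finset.range n, (1 - (1 / Fintype.card F : ℝ) ^ (i + 1)) := by
  have hq : (Fintype.card F : ℝ) ≠ 0 := by exact_mod_cast Fintype.card_ne_zero
  have h : gl F n = ∏ i : Fin n, (Fintype.card F ^ n - Fintype.card F ^ (i : ℕ)) := by
    rw [← Matrix.card_GL_field, gl]
    exact Nat.card_congr ((LinearMap.GeneralLinearGroup.generalLinearEquiv F
      (Fin n → F)).symm.trans Matrix.GeneralLinearGroup.toLin.symm).toEquiv
  rw [h, Nat.cast_prod,
    Finset.prod_fin_eq_prod_range,
    ← Finset.prod_range_reflect, sq, pow_mul]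
  have hc : ((Fintype.card F : ℝ) ^ n) ^ n = ∏ _i ∈ Finset.range n, (Fintype.card F : ℝ) ^ n := by
    simp
  rw [hc, ← Finset.prod_mul_distrib]
  refine Finset.prod_congr rfl fun i hi => ?_
  have hi := Finset.mem_range.1 hi
  rw [dif_pos (by omega), Nat.cast_sub (Nat.pow_le_pow_right Fintype.card_pos (by simp; omega))]
  push_cast
  have : (Fintype.card F : ℝ) ^ n = Fintype.card F ^ (n - 1 - i) * Fintype.card F ^ (i + 1) := by
    rw [← pow_add]; congr 1; omega
  rw [mul_sub, this, mul_one, mul_assoc, ← mul_pow, mul_one_div_cancel hq, one_pow, mul_one]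

end Count

/-! ### Two analytic lemmas -/

section Analysis

/-- Deconvolution preserves limits: if `A = ν * B` converges to `a`, where `ν` is nonnegative with
`ν 0 = 1` and total mass `P < 2`, then `B` converges to `a / P`. The error `|B n - a / P|` obeys a
renewal inequality with weights `ν (k + 1)`, whose sum `P - 1` is less than `1`. -/
lemma renewal {ν A B : ℕ → ℝ} {P a : ℝ} (hν : ∀ n, 0 ≤ ν n) (h0 : ν 0 = 1) (hP : HasSum ν P)
    (hP2 : P < 2) (hB : ∀ n, 0 ≤ B n)
    (hA : ∀ n, A n = ∑ p ∈ Finset.HasAntidiagonal.antidiagonal n, ν p.1 * B p.2)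
    (ha : Tendsto A atTop (nhds a)) : Tendsto B atTop (nhds (a / P)) := by
  have hP1 : 1 ≤ P := h0 ▸ le_hasSum hP 0 fun n _ => hν n
  set b := a / P
  have hab : a = b * P := by simp only [b]; field_simp
  have hA' : ∀ n, A n = ∑ k ∈ Finset.range (n + 1), ν k * B (n - k) := fun n => by
    rw [hA, Finset.Nat.sum_antidiagonal_eq_sum_range_succ_mk]
  set s : ℕ → ℝ := fun n => ∑ k ∈ Finset.range n, ν k
  have hs : Tendsto s atTop (nhds P) := hP.tendsto_sum_nat
  have hsP : ∀ n, s n ≤ P := fun n => sum_le_hasSum _ (fun n _ => hν n) hP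
  -- This gives boundedness of `B`, since the convergent sequence `A` is bounded.
  have hBA : ∀ n, B n ≤ A n := fun n => by
    rw [hA', Finset.sum_range_succ', h0]
    have : 0 ≤ ∑ k ∈ Finset.range n, ν (k + 1) * B (n - (k + 1)) :=
      Finset.sum_nonneg fun k _ => mul_nonneg (hν _) (hB _)
    simpa using this
  obtain ⟨C0, hC0⟩ := ha.bddAbove_range
  set C := C0 + |b|
  have heC : ∀ n, |B n - b| ≤ C := fun n => by
    have h1 : B n ≤ C0 := (hBA n).trans (hC0 ⟨n, rfl⟩)
    have := abs_sub (B n) b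
    rw [abs_of_nonneg (hB n)] at this
    simp only [C]; linarith
  have hC : 0 ≤ C := (abs_nonneg _).trans (heC 0)
  have hrec : ∀ n, |B n - b| ≤ |A n - a| + |b| * (P - s (n + 1)) +
      ∑ k ∈ Finset.range n, ν (k + 1) * |B (n - (k + 1)) - b| := fun n => by
    have h1 : B n - b = (A n - a) + b * (P - s (n + 1)) -
        ∑ k ∈ Finset.range n, ν (k + 1) * (B (n - (k + 1)) - b) := by
      rw [hA', Finset.sum_range_succ', hab]
      simp only [s, mul_sub, Finset.sum_sub_distrib, ← Finset.sum_mul]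
      rw [Finset.sum_range_succ' ν, h0]
      simp only [Nat.sub_zero]
      ring
    rw [h1]
    refine (abs_sub _ _).trans (add_le_add ((abs_add_le _ _).trans ?_) ?_)
    · rw [abs_mul, abs_of_nonneg (sub_nonneg.2 (hsP _))]
    · refine (Finset.abs_sum_le_sum_abs _ _).trans (Finset.sum_le_sum fun k _ => ?_)
      rw [abs_mul, abs_of_nonneg (hν _)]
  have hstep : ∀ x, 0 ≤ x → (∀ᶠ n in atTop, |B n - b| ≤ x) → ∀ η > 0,
      ∀ᶠ n in atTop, |B n - b| ≤ (P - 1) * x + η := by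
    intro x hx hev η hη
    obtain ⟨N, hN⟩ := eventually_atTop.1 hev
    have hsum : ∀ n, N ≤ n → ∑ k ∈ Finset.range n, ν (k + 1) * |B (n - (k + 1)) - b| ≤
        (P - 1) * x + C * (P - s (n - N + 1)) := by
      intro n hn
      have hs1 : ∀ m, ∑ k ∈ Finset.range m, ν (k + 1) = s (m + 1) - 1 := fun m => by
        simp only [s]; rw [Finset.sum_range_succ' ν, h0]; ring
      rw [← Finset.sum_range_add_sum_Ico _ (Nat.sub_le n N)]
      have hIco : ∑ k ∈ Finset.Ico (n - N) n, ν (k + 1) = s (n + 1) - s (n - N + 1) := by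
        rw [Finset.sum_Ico_eq_sub _ (Nat.sub_le n N), hs1, hs1]; ring
      refine add_le_add ?_ ?_
      · calc _ ≤ ∑ k ∈ Finset.range (n - N), ν (k + 1) * x := by
              refine Finset.sum_le_sum fun k hk => mul_le_mul_of_nonneg_left (hN _ ?_) (hν _)
              have := Finset.mem_range.1 hk
              omega
          _ = (s (n - N + 1) - 1) * x := by rw [← Finset.sum_mul, hs1]
          _ ≤ _ := mul_le_mul_of_nonneg_right (by linarith [hsP (n - N + 1)]) hx
      · calc _ ≤ ∑ k ∈ Finset.Ico (n - N) n, ν (k + 1) * C :=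
              Finset.sum_le_sum fun k _ => mul_le_mul_of_nonneg_left (heC _) (hν _)
          _ = C * (s (n + 1) - s (n - N + 1)) := by rw [← Finset.sum_mul, hIco, mul_comm]
          _ ≤ _ := mul_le_mul_of_nonneg_left (by linarith [hsP (n + 1)]) hC
    have hlim : Tendsto (fun n => |A n - a| + |b| * (P - s (n + 1)) + C * (P - s (n - N + 1)))
        atTop (nhds 0) := by
      have h1 : Tendsto (fun n => |A n - a|) atTop (nhds 0) := by
        simpa using (ha.sub_const a).abs
      have h2 : Tendsto (fun n => |b| * (P - s (n + 1))) atTop (nhds 0) := by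
        simpa using ((hs.comp (tendsto_add_atTop_nat 1)).const_sub P).const_mul |b|
      have h3 : Tendsto (fun n => C * (P - s (n - N + 1))) atTop (nhds 0) := by
        simpa using ((hs.comp ((tendsto_add_atTop_nat 1).comp
          (tendsto_sub_atTop_nat N))).const_sub P).const_mul C
      simpa using (h1.add h2).add h3
    filter_upwards [hlim.eventually (gt_mem_nhds hη), eventually_ge_atTop N] with n h1 h2
    linarith [hrec n, hsum n h2]
  -- With `η = (1 - P / 2) * x`, `hstep` multiplies an eventual bound `x` by `P / 2 < 1`; starting
  -- from `C + 1` rather than `C` keeps `η` positive.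
  have hiter : ∀ m : ℕ, ∀ᶠ n in atTop, |B n - b| ≤ (P / 2) ^ m * (C + 1) := by
    intro m
    induction m with
    | zero => exact Eventually.of_forall fun n => by simpa using (heC n).trans (by linarith)
    | succ m ih =>
      have hpos : 0 < (P / 2) ^ m * (C + 1) := by positivity
      have := hstep _ hpos.le ih ((1 - P / 2) * ((P / 2) ^ m * (C + 1)))
        (mul_pos (by linarith) hpos)
      filter_upwards [this] with n hn
      rw [pow_succ]; linarith
  have hgeo : Tendsto (fun m : ℕ => (P / 2) ^ m * (C + 1)) atTop (nhds 0) := by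
    simpa using (tendsto_pow_atTop_nhds_zero_of_lt_one (r := P / 2) (by linarith)
      (by linarith)).mul_const (C + 1)
  rw [Metric.tendsto_atTop']
  intro ε hε
  obtain ⟨m, hm⟩ := (hgeo.eventually (gt_mem_nhds hε)).exists
  obtain ⟨N, hN⟩ := eventually_atTop.1 (hiter m)
  exact ⟨N, fun n hn => by rw [Real.dist_eq]; exact (hN n hn.le).trans_lt hm⟩

/-- The lower bound is `1 - ∑ x ^ i`, the geometric sum being in closed form. -/
lemma prod_bounds {x : ℝ} (hx0 : 0 ≤ x) (hx1 : x < 1) (n : ℕ) :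
    1 - (1 - x ^ n) * (x / (1 - x)) ≤ ∏ i ∈ Finset.range n, (1 - x ^ (i + 1)) ∧
    0 < ∏ i ∈ Finset.range n, (1 - x ^ (i + 1)) ∧
    ∏ i ∈ Finset.range n, (1 - x ^ (i + 1)) ≤ 1 := by
  have h1x : 0 < 1 - x := by linarith
  induction n with
  | zero => simp
  | succ n ih =>
    obtain ⟨h1, h2, h3⟩ := ih
    rw [Finset.prod_range_succ]
    have h4 : 0 ≤ x ^ (n + 1) := by positivity
    have h5 : x ^ (n + 1) < 1 := pow_lt_one₀ hx0 hx1 (by omega)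
    have h6 : x ^ (n + 1) = (x ^ n - x ^ (n + 1)) * (x / (1 - x)) := by
      field_simp; ring
    refine ⟨?_, mul_pos h2 (by linarith), ?_⟩
    · nlinarith
    · nlinarith

end Analysis

/-! ### The limit for a fixed field -/

section Limit
variable {F : Type} [Field F] [Fintype F]

lemma ratio_empty (n : ℕ) : ratio (∅ : Set F) n =
    (∏ i ∈ Finset.range n, (1 - (1 / Fintype.card F : ℝ) ^ (i + 1)))⁻¹ := by
  have hq : (Fintype.card F : ℝ) ≠ 0 := by exact_mod_cast Fintype.card_ne_zero
  rw [ratio, freeCard_empty, gl_eq]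
  push_cast
  rw [div_mul_eq_div_div, div_self (pow_ne_zero _ hq), one_div]

/-- The recursion `ratio_eq_sum` at `S = ∅`, where `ratio {c} = 1`. -/
lemma sum_nu (c : F) (n : ℕ) : ∑ k ∈ Finset.range (n + 1), nu c k = ratio (∅ : Set F) n := by
  rw [ratio_eq_sum (Set.notMem_empty c), Finset.Nat.sum_antidiagonal_eq_sum_range_succ_mk]
  refine Finset.sum_congr rfl fun k _ => ?_
  have : (gl F (n - k) : ℝ) ≠ 0 := by exact_mod_cast (gl_pos _).ne'
  rw [insert_empty_eq, ratio, freeCard_singleton, div_self this, mul_one]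

/-- Here `P = ∏_{i ≥ 1} (1 - q⁻ⁱ)⁻¹`. The assumption on `q` ensures `P < 2`, as `renewal` needs. -/
lemma exists_limit (hq : 4 ≤ Fintype.card F) : ∃ P : ℝ, P < 2 ∧
    1 - 1 / ((Fintype.card F : ℝ) - 1) ≤ P⁻¹ ∧ P⁻¹ ≤ 1 - 1 / (Fintype.card F : ℝ) ∧
    0 < P ∧ Tendsto (ratio (∅ : Set F)) atTop (nhds P) ∧ ∀ c : F, HasSum (nu c) P := by
  have hq' : (4 : ℝ) ≤ Fintype.card F := by exact_mod_cast hq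
  set q : ℝ := (Fintype.card F : ℝ)
  set x : ℝ := 1 / q with hx
  have hx0 : 0 ≤ x := by positivity
  have hx1 : x < 1 := by rw [hx, div_lt_one] <;> linarith
  have hxx : x / (1 - x) = 1 / (q - 1) := by
    have : q - 1 ≠ 0 := by linarith
    rw [hx]; field_simp
  set R : ℕ → ℝ := fun n => ∏ i ∈ Finset.range n, (1 - x ^ (i + 1))
  have hR0 : ∀ n, 0 < R n := fun n => (prod_bounds hx0 hx1 n).2.1
  have hy : 1 / (q - 1) ≤ 1 / 3 := one_div_le_one_div_of_le (by norm_num) (by linarith)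
  have hRl : ∀ n, 1 - 1 / (q - 1) ≤ R n := fun n => by
    have := (prod_bounds hx0 hx1 n).1
    rw [hxx] at this
    have h1 : 0 ≤ x ^ n := by positivity
    have h2 : 0 ≤ 1 / (q - 1) := by apply one_div_nonneg.2; linarith
    change _ ≤ R n at this
    nlinarith
  have hRanti : ∀ n, R (n + 1) ≤ R n := fun n => by
    simp only [R]; rw [Finset.prod_range_succ]
    have : 0 ≤ x ^ (n + 1) := by positivity
    have := hR0 n
    change R n * _ ≤ R n
    nlinarith
  have hRa : Antitone R := antitone_nat_of_succ_le hRanti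
  have hlim := tendsto_atTop_ciInf hRa ⟨0, by rintro _ ⟨n, rfl⟩; exact (hR0 n).le⟩
  set z := ⨅ i, R i
  have hz1 : 1 - 1 / (q - 1) ≤ z := ge_of_tendsto' hlim hRl
  have hz2 : z ≤ 1 - x := le_of_tendsto hlim
    ((eventually_ge_atTop 1).mono fun n hn => (hRa hn).trans (by simp [R]))
  have hz0 : 0 < z := by linarith
  have hrat : Tendsto (ratio (∅ : Set F)) atTop (nhds z⁻¹) :=
    (hlim.inv₀ hz0.ne').congr fun n => (ratio_empty n).symm
  refine ⟨z⁻¹, ?_, by rwa [inv_inv], by rwa [inv_inv], inv_pos.2 hz0, hrat, fun c => ?_⟩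
  · rw [inv_lt_comm₀ hz0 two_pos]; linarith
  · rw [hasSum_iff_tendsto_nat_of_nonneg (fun n => by unfold nu; positivity),
      ← tendsto_add_atTop_iff_nat 1]
    exact hrat.congr fun n => (sum_nu c n).symm

lemma tendsto_ratio {P : ℝ} (hP2 : P < 2) (h0 : Tendsto (ratio (∅ : Set F)) atTop (nhds P))
    (hs : ∀ c : F, HasSum (nu c) P) (S : Finset F) :
    Tendsto (ratio (S : Set F)) atTop (nhds (P * P⁻¹ ^ S.card)) := by
  classical
  induction S using Finset.induction_on with
  | empty => simpa using h0
  | insert c S hc ih =>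
    have := renewal (fun n => by unfold nu; positivity)
      (by have := sum_nu c 0; simpa [ratio_empty] using this) (hs c) hP2
      (fun n => by unfold ratio; positivity) (ratio_eq_sum (c := c) (by simpa using hc)) ih
    rw [Finset.card_insert_of_notMem hc, Finset.coe_insert, pow_succ, ← mul_assoc]
    exact this

end Limit
end EigFree

/-- Eigenvalue-free matrices in `GL(n,q)`: for each finite field `F` of order `q`, the
proportion of eigenvalue-free matrices in `GL(n,q)` converges as `n → ∞` to a limit
`L(q)`, and `L(q) → 1/e` as the prime power `q → ∞`. -/
theorem stmt_19 :
    ∀ ε : ℝ, 0 < ε → ∃ Q : ℕ, ∀ q : ℕ, Q < q → IsPrimePow q →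
      ∀ (F : Type) (_ : Field F) (_ : Fintype F), Fintype.card F = q →
        ∃ L : ℝ,
          Tendsto (fun n : ℕ =>
              (Nat.card {M : Matrix (Fin n) (Fin n) F //
                  IsUnit M ∧ ∀ c : F, ¬ M.charpoly.IsRoot c} : ℝ) /
                (Nat.card {M : Matrix (Fin n) (Fin n) F // IsUnit M} : ℝ))
            atTop (nhds L) ∧
          |L - Real.exp (-1)| < ε := by
  intro ε hε
  have hlo : Tendsto (fun m : ℕ => (1 + (-1) / (m : ℝ)) ^ m) atTop (nhds (Real.exp (-1))) :=
    Real.tendsto_one_add_div_pow_exp (-1)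
  have hhi : Tendsto (fun m : ℕ => (1 + (-1) / ((m : ℝ) + 1)) ^ m) atTop
      (nhds (Real.exp (-1))) := by
    apply Real.tendsto_one_add_pow_exp_of_tendsto
    have := (tendsto_natCast_div_add_atTop (1 : ℝ)).neg
    refine this.congr fun n => ?_
    ring
  -- Both bounds are indexed by `m = q - 1`.
  obtain ⟨N, hN⟩ := eventually_atTop.1
    ((hlo.eventually (Metric.ball_mem_nhds _ hε)).and (hhi.eventually (Metric.ball_mem_nhds _ hε)))
  refine ⟨max N 4, fun q hq _ F _ _ hF => ?_⟩
  have hN1 : N ≤ q - 1 := by have := le_max_left N 4; omega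
  have hq4 : 4 ≤ Fintype.card F := by have := le_max_right N 4; omega
  obtain ⟨P, hP2, hPl, hPu, hP0, h0, hs⟩ := EigFree.exists_limit hq4
  have hT := EigFree.tendsto_ratio hP2 h0 hs (Finset.univ : Finset F)
  refine ⟨_, hT.congr fun n => ?_, ?_⟩
  · rw [EigFree.ratio]
    congr 2
    · refine Nat.card_congr (Equiv.subtypeEquiv (LinearMap.toMatrix' (R := F)).toEquiv ?_)
      intro f
      have hcp : (LinearMap.toMatrix' f).charpoly = f.charpoly := by
        rw [← Matrix.charpoly_toLin', Matrix.toLin'_toMatrix']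
      simp only [Finset.coe_univ, Set.mem_univ, forall_const, LinearEquiv.coe_toEquiv, hcp]
      refine ⟨fun h => ⟨?_, h⟩, fun h => h.2⟩
      -- Invertibility is the absence of the eigenvalue `0`.
      have h1 := h 0
      rw [← hcp, Polynomial.IsRoot.def, Matrix.eval_charpoly] at h1
      rw [Matrix.isUnit_iff_isUnit_det, isUnit_iff_ne_zero]
      intro h2
      apply h1
      simp [Matrix.det_neg, h2]
    · rw [EigFree.gl]
      exact Nat.card_congr (((LinearMap.GeneralLinearGroup.generalLinearEquiv F
        (Fin n → F)).symm.trans Matrix.GeneralLinearGroup.toLin.symm).toEquiv.trans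
        Submonoid.unitsTypeEquivIsUnitSubmonoid.toEquiv)
  · obtain ⟨m, hm⟩ : ∃ m, q = m + 1 := ⟨q - 1, by omega⟩
    obtain ⟨h1, h2⟩ := hN m (by omega)
    have hm3 : (3 : ℝ) ≤ m := by
      have : 3 ≤ m := by omega
      exact_mod_cast this
    rw [Finset.card_univ, hF, hm, pow_succ, mul_comm _ P⁻¹, ← mul_assoc,
      mul_inv_cancel₀ hP0.ne', one_mul]
    rw [hF, hm] at hPl hPu
    push_cast at hPl hPu
    rw [add_sub_cancel_right] at hPl
    have e1 : (1 + (-1) / (m : ℝ)) = 1 - 1 / m := by ring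
    have e2 : (1 + (-1) / ((m : ℝ) + 1)) = 1 - 1 / (m + 1) := by ring
    rw [Real.dist_eq, abs_lt] at h1 h2
    rw [e1] at h1
    rw [e2] at h2
    have h3 : 0 ≤ 1 - 1 / (m : ℝ) := by
      rw [sub_nonneg, div_le_one] <;> linarith
    have h4 := pow_le_pow_left₀ h3 hPl m
    have h5 := pow_le_pow_left₀ (inv_pos.2 hP0).le hPu m
    rw [abs_lt]
    constructor <;> linarith [h1.1, h2.2]
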